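/- arXiv:2001.02425 — 2 statements merged into one kernel-verified Lean document; each statement's English description precedes it below -/
import Mathlib

section
/- For all real parameters p, q and all finite words u, v with entries in {0,1}: w_{p,q}(u ++ (1,0) ++ v) − w_{p,q}(u ++ (0,1) ++ v) = (p − q) · w_{p,q}(u ++ (1) ++ v), where ++ denotes concatenation of words. -/
open Finset

/-- The stationary weight of a word `a` with entries in `{0,1}` (encoded as `Fin 2`):
the product over positions `i` with `a i = 0` of `1 + p·m_i(a) + q·n_i(a)`,
where `m_i(a)` (resp. `n_i(a)`) is the number of `1`'s strictly before (resp. after) `i`. -/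
noncomputable def wt (p q : ℝ) {m : ℕ} (a : Fin m → Fin 2) : ℝ :=
  ∏ i ∈ univ.filter (fun i => a i = 0),
    (1 + p * ((univ.filter (fun j => j < i ∧ a j = 1)).card : ℝ)
       + q * ((univ.filter (fun j => i < j ∧ a j = 1)).card : ℝ))

/-- The number of `1`'s in the word `a`. -/
def ones {m : ℕ} (a : Fin m → Fin 2) : ℕ := (univ.filter (fun i => a i = 1)).card

/-- The restricted partition function `R(L, n; p, q)`: the sum of the weights `wt p q a`
over all words `a` of length `L - 1` with entries in `{0,1}` having exactly `n` ones. -/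
noncomputable def R (L n : ℕ) (p q : ℝ) : ℝ :=
  ∑ a ∈ univ.filter (fun a : Fin (L - 1) → Fin 2 => ones a = n), wt p q a

/-- The weight of `a` seen as a factor of a longer word, with `b` ones to its left and
`c` ones to its right. -/
noncomputable def shiftedWt (p q b c : ℝ) {m : ℕ} (a : Fin m → Fin 2) : ℝ :=
  ∏ i, if a i = 0 then
    1 + p * (b + ∑ j, if j < i ∧ a j = 1 then 1 else 0)
      + q * (c + ∑ j, if i < j ∧ a j = 1 then 1 else 0) else 1

theorem wt_eq_shiftedWt (p q : ℝ) {m : ℕ} (a : Fin m → Fin 2) :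
    wt p q a = shiftedWt p q 0 0 a := by
  simp [wt, shiftedWt, prod_filter]

theorem shiftedWt_append (p q b c : ℝ) {m n : ℕ} (x : Fin m → Fin 2) (y : Fin n → Fin 2) :
    shiftedWt p q b c (Fin.append x y)
      = shiftedWt p q b (c + ∑ j, if y j = 1 then 1 else 0) x
        * shiftedWt p q (b + ∑ j, if x j = 1 then 1 else 0) c y := by
  have hlt (i : Fin m) (j : Fin n) : Fin.castAdd n i < Fin.natAdd m j := by
    simp only [Fin.lt_def, Fin.val_castAdd, Fin.val_natAdd]; omega
  have hnlt (i : Fin m) (j : Fin n) : ¬ Fin.natAdd m j < Fin.castAdd n i := (hlt i j).not_gt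
  have hl (i j : Fin m) : Fin.castAdd n i < Fin.castAdd n j ↔ i < j := Iff.rfl
  have hr (i j : Fin n) : Fin.natAdd m i < Fin.natAdd m j ↔ i < j := by
    simp only [Fin.lt_def, Fin.val_natAdd]; omega
  simp only [shiftedWt, Fin.prod_univ_add, Fin.sum_univ_add, Fin.append_left, Fin.append_right,
    hlt, hnlt, hl, hr, true_and, false_and, if_false, sum_const_zero]
  congr 1 <;> refine prod_congr rfl fun i _ => ?_ <;> split_ifs <;> ring

/-- the key weight identity
`w(u ++ 10 ++ v) - w(u ++ 01 ++ v) = (p - q) · w(u ++ 1 ++ v)`. -/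
theorem wt_exchange (p q : ℝ) {mu mv : ℕ} (u : Fin mu → Fin 2) (v : Fin mv → Fin 2) :
    wt p q (Fin.append (Fin.append u ![1, 0]) v)
      - wt p q (Fin.append (Fin.append u ![0, 1]) v)
      = (p - q) * wt p q (Fin.append (Fin.append u ![1]) v) := by
  simp only [wt_eq_shiftedWt, shiftedWt_append]
  simp only [Fin.sum_univ_add, Fin.append_left, Fin.append_right]
  have h10 (b c : ℝ) : shiftedWt p q b c ![1, 0] = 1 + p * (b + 1) + q * c := by
    simp [shiftedWt, -sum_boole]
  have h01 (b c : ℝ) : shiftedWt p q b c ![0, 1] = 1 + p * b + q * (c + 1) := by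
    simp [shiftedWt, -sum_boole]
  have h1 (b c : ℝ) : shiftedWt p q b c ![1] = 1 := by
    simp [shiftedWt]
  rw [h10, h01, h1]
  simp [-sum_boole]
  ring
end

section
/- Let L ≥ 3 and 1 ≤ n ≤ L−2 be integers, let p, q be real parameters, and fix a position k with 1 ≤ k ≤ L−2. Then ∑_{a : a_k = 1, a_{k+1} = 0} w_{p,q}(a) − ∑_{a : a_k = 0, a_{k+1} = 1} w_{p,q}(a) = (p − q) · ∑_{b : b_k = 1} w_{p,q}(b), where the first two sums run over words a of length L−1 with entries in {0,1} having exactly n ones and the prescribed values at positions k and k+1, and the last sum runs over words b of length L−2 with entries in {0,1} having exactly n ones and b_k = 1. -/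
open Finset

/-- Positions of ones that satisfy `P` are not affected by inserting a `0`. -/
theorem card_filter_insertNth_zero {m : ℕ} (x : Fin (m + 1)) (b : Fin m → Fin 2)
    (P : Fin (m + 1) → Prop) [DecidablePred P] :
    (univ.filter (fun j => P j ∧ x.insertNth (α := fun _ => Fin 2) 0 b j = 1)).card
      = (univ.filter (fun i => P (x.succAbove i) ∧ b i = 1)).card := by
  simp only [card_filter]
  rw [Fin.sum_univ_succAbove _ x]
  simp only [Fin.insertNth_apply_same, Fin.insertNth_apply_succAbove]
  simp

theorem ones_insertNth_zero {m : ℕ} (x : Fin (m + 1)) (b : Fin m → Fin 2) :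
    ones (x.insertNth (α := fun _ => Fin 2) 0 b) = ones b := by
  simpa [ones] using card_filter_insertNth_zero x b (fun _ => True)

/-- Inserting a `0` at `x` multiplies the weight by the factor of the new position. -/
theorem wt_insertNth_zero (p q : ℝ) {m : ℕ} (x : Fin (m + 1)) (b : Fin m → Fin 2) :
    wt p q (x.insertNth (α := fun _ => Fin 2) 0 b) =
      (1 + p * ((univ.filter (fun i => x.succAbove i < x ∧ b i = 1)).card : ℝ)
         + q * ((univ.filter (fun i => x < x.succAbove i ∧ b i = 1)).card : ℝ)) * wt p q b := by
  unfold wt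
  simp only [card_filter_insertNth_zero x b, prod_filter]
  rw [Fin.prod_univ_succAbove _ x]
  simp [Fin.succAbove_lt_succAbove_iff]

/-- Words with a `0` at `x` correspond to shorter words by deleting that `0`. -/
theorem sum_filter_apply_eq_zero {m : ℕ} (x : Fin (m + 1)) (f : (Fin (m + 1) → Fin 2) → ℝ)
    (P : (Fin (m + 1) → Fin 2) → Prop) (Q : (Fin m → Fin 2) → Prop)
    [DecidablePred P] [DecidablePred Q]
    (h0 : ∀ a, P a → a x = 0)
    (hPQ : ∀ b, P (x.insertNth (α := fun _ => Fin 2) 0 b) ↔ Q b) :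
    ∑ a ∈ univ.filter P, f a =
      ∑ b ∈ univ.filter Q, f (x.insertNth (α := fun _ => Fin 2) 0 b) := by
  have key : ∀ a, P a → x.insertNth (α := fun _ => Fin 2) 0 (x.removeNth a) = a := by
    intro a ha
    rw [← h0 a ha, Fin.insertNth_self_removeNth]
  refine sum_nbij' (fun a => x.removeNth a) (fun b => x.insertNth (α := fun _ => Fin 2) 0 b)
    ?_ ?_ ?_ ?_ ?_
  · intro a ha
    simp only [mem_filter, mem_univ, true_and] at ha ⊢
    rw [← hPQ, key a ha]
    exact ha
  · intro b hb
    simpa [hPQ] using hb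
  · intro a ha
    exact key a (by simpa using ha)
  · intro b _
    simp
  · intro a ha
    rw [key a (by simpa using ha)]

/-- Moving an inserted `0` across a `1` at `j`, from right to left, changes the weight by
`(p - q)` times the weight of the original word. -/
theorem wt_insertNth_succ_sub_wt_insertNth_castSucc (p q : ℝ) {m : ℕ} (j : Fin m)
    (b : Fin m → Fin 2) (hb : b j = 1) :
    wt p q (j.succ.insertNth (α := fun _ => Fin 2) 0 b)
      - wt p q (j.castSucc.insertNth (α := fun _ => Fin 2) 0 b) = (p - q) * wt p q b := by
  have hle : (univ.filter (fun i => i ≤ j ∧ b i = 1)).card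
      = (univ.filter (fun i => i < j ∧ b i = 1)).card + 1 := by
    rw [← card_insert_of_notMem (a := j) (by simp)]
    congr 1
    ext i
    simp only [mem_filter, mem_univ, true_and, mem_insert]
    grind
  have hge : (univ.filter (fun i => j ≤ i ∧ b i = 1)).card
      = (univ.filter (fun i => j < i ∧ b i = 1)).card + 1 := by
    rw [← card_insert_of_notMem (a := j) (by simp)]
    congr 1
    ext i
    simp only [mem_filter, mem_univ, true_and, mem_insert]
    grind
  have h1 : ∀ i, j.succ.succAbove i < j.succ ↔ i ≤ j := fun i => by
    rw [Fin.succAbove_lt_iff_castSucc_lt, Fin.castSucc_lt_succ_iff]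
  have h2 : ∀ i, j.succ < j.succ.succAbove i ↔ j < i := fun i => by
    rw [Fin.lt_succAbove_iff_lt_castSucc, Fin.succ_lt_succ_iff]
  have h3 : ∀ i, j.castSucc.succAbove i < j.castSucc ↔ i < j := fun i => by
    rw [Fin.succAbove_lt_iff_castSucc_lt, Fin.castSucc_lt_castSucc_iff]
  have h4 : ∀ i, j.castSucc < j.castSucc.succAbove i ↔ j ≤ i := fun i => by
    rw [Fin.lt_succAbove_iff_le_castSucc, Fin.castSucc_le_castSucc_iff]
  simp only [wt_insertNth_zero, h1, h2, h3, h4, hle, hge]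
  push_cast
  ring

/-- the correlation identity at a fixed pair of neighbouring positions
`k, k+1` (positions `1, …, L-1` of the word correspond to indices `0, …, L-2`). -/
theorem current_correlation (L n k : ℕ) (hL : 3 ≤ L) (hn1 : 1 ≤ n) (hn2 : n ≤ L - 2)
    (hk1 : 1 ≤ k) (hk2 : k ≤ L - 2) (p q : ℝ) :
    (∑ a ∈ univ.filter (fun a : Fin (L - 1) → Fin 2 =>
        ones a = n ∧ a ⟨k - 1, by omega⟩ = 1 ∧ a ⟨k, by omega⟩ = 0), wt p q a)
    - (∑ a ∈ univ.filter (fun a : Fin (L - 1) → Fin 2 =>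
        ones a = n ∧ a ⟨k - 1, by omega⟩ = 0 ∧ a ⟨k, by omega⟩ = 1), wt p q a)
    = (p - q) * ∑ b ∈ univ.filter (fun b : Fin (L - 2) → Fin 2 =>
        ones b = n ∧ b ⟨k - 1, by omega⟩ = 1), wt p q b := by
  obtain ⟨m, rfl⟩ : ∃ m, L = m + 2 := ⟨L - 2, by omega⟩
  obtain ⟨j, rfl⟩ : ∃ j, k = j + 1 := ⟨k - 1, by omega⟩
  have hj : j < m := by omega
  let i : Fin m := ⟨j, hj⟩
  change (∑ a ∈ univ.filter (fun a : Fin (m + 1) → Fin 2 =>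
        ones a = n ∧ a i.castSucc = 1 ∧ a i.succ = 0), wt p q a)
    - (∑ a ∈ univ.filter (fun a : Fin (m + 1) → Fin 2 =>
        ones a = n ∧ a i.castSucc = 0 ∧ a i.succ = 1), wt p q a)
    = (p - q) * ∑ b ∈ univ.filter (fun b : Fin m → Fin 2 => ones b = n ∧ b i = 1), wt p q b
  have hsucc (b : Fin m → Fin 2) :
      i.succ.insertNth (α := fun _ => Fin 2) 0 b i.castSucc = b i := by
    simpa using Fin.insertNth_apply_succAbove (α := fun _ => Fin 2) i.succ 0 b i
  have hcast (b : Fin m → Fin 2) :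
      i.castSucc.insertNth (α := fun _ => Fin 2) 0 b i.succ = b i := by
    simpa using Fin.insertNth_apply_succAbove (α := fun _ => Fin 2) i.castSucc 0 b i
  rw [sum_filter_apply_eq_zero i.succ (wt p q) _ (fun b => ones b = n ∧ b i = 1)
      (fun a ha => ha.2.2) (fun b => by simp [ones_insertNth_zero, hsucc]),
    sum_filter_apply_eq_zero i.castSucc (wt p q) _ (fun b => ones b = n ∧ b i = 1)
      (fun a ha => ha.2.1) (fun b => by simp [ones_insertNth_zero, hcast]),
    ← sum_sub_distrib, mul_sum]
  refine sum_congr rfl fun b hb => ?_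
  exact wt_insertNth_succ_sub_wt_insertNth_castSucc p q i b (mem_filter.mp hb).2.2
end
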